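/- Let φ ∈ H³(ℝ³; ℝ) be radial (invariant under all rotations of ℝ³) with ∇φ ≠ 0. Set λ := ‖∇φ‖²_{L²}/6 and M^{LP} := (2/3)‖∇φ‖²_{L²}. Let Π₀ be the orthogonal projection in L²(ℝ³; ℂ) onto the complex span of the three partial derivatives ∂₁φ, ∂₂φ, ∂₃φ, and Π₁ := 1 − Π₀. For α > 0 and P ∈ ℝ³ define ξ_P := i (α² M^{LP})^{−1} (P·∇)φ, φ_P := φ + ξ_P, and w_{P,y} := φ_P − τ_y φ_P, where (τ_y f)(z) = f(z−y). Then for every c > 0 there is a constant C > 0 such that for all y ∈ ℝ³, all α > 0, and all P with |P| ≤ c α: (i) ‖Π₁ w_{P,y}‖²_{L²} ≤ C (α^{−2}|y|² + |y|⁴), and (ii) | ‖Π₀ w_{P,y}‖²_{L²} − 2λ|y|² | ≤ C (α^{−2}|y|² + |y|⁴ + |y|⁶). -/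

import Mathlib

open MeasureTheory Real Complex
open scoped ComplexConjugate

noncomputable section

abbrev E3 := EuclideanSpace ℝ (Fin 3)
abbrev HH := Lp ℝ 2 (volume : Measure E3)

/-- `g` is the weak derivative of `f` in direction `v`. -/
def WD (f : E3 → ℝ) (v : E3) (g : E3 → ℝ) : Prop :=
  ∀ ϑ : E3 → ℝ, ContDiff ℝ (⊤ : ℕ∞) ϑ → HasCompactSupport ϑ →
    ∫ x, f x * fderiv ℝ ϑ x v = - ∫ x, g x * ϑ x

lemma test_memLp {ϑ : E3 → ℝ} (h : ContDiff ℝ (⊤ : ℕ∞) ϑ) (hc : HasCompactSupport ϑ) :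
    MemLp ϑ 2 volume := h.continuous.memLp_of_hasCompactSupport hc

lemma test_deriv_memLp {ϑ : E3 → ℝ} (h : ContDiff ℝ (⊤ : ℕ∞) ϑ) (hc : HasCompactSupport ϑ)
    (v : E3) : MemLp (fun x => fderiv ℝ ϑ x v) 2 volume := by
  have h1 : Continuous (fun x => fderiv ℝ ϑ x v) :=
    (h.continuous_fderiv (by simp)).clm_apply continuous_const
  exact h1.memLp_of_hasCompactSupport (hc.fderiv_apply (𝕜 := ℝ) v)

lemma WD.sum_dir {f : E3 → ℝ} {g : Fin 3 → E3 → ℝ} (hf : MemLp f 2 volume)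
    (hg : ∀ i, MemLp (g i) 2 volume) (h : ∀ i, WD f (EuclideanSpace.single i 1) (g i)) (y : E3) :
    WD f y (fun x => ∑ i, y i * g i x) := by
  intro ϑ h1 h2
  have hy : y = ∑ i, y i • (EuclideanSpace.single i (1:ℝ) : E3) := by
    ext j; simp [Finset.sum_apply, Pi.single_apply]
  have e1 : ∀ x, f x * fderiv ℝ ϑ x y
      = ∑ i, y i * (f x * fderiv ℝ ϑ x (EuclideanSpace.single i 1)) := by
    intro x
    conv_lhs => rw [hy]
    rw [map_sum, Finset.mul_sum]
    refine Finset.sum_congr rfl fun i _ => ?_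
    rw [map_smul, smul_eq_mul]; ring
  have e2 : ∀ x, (∑ i, y i * g i x) * ϑ x = ∑ i, y i * (g i x * ϑ x) := by
    intro x; rw [Finset.sum_mul]; refine Finset.sum_congr rfl fun i _ => by ring
  simp only [e1, e2]
  rw [integral_finsetSum, integral_finsetSum, ← Finset.sum_neg_distrib]
  · refine Finset.sum_congr rfl fun i _ => ?_
    rw [integral_const_mul, integral_const_mul, h i ϑ h1 h2]; ring
  · exact fun i _ => ((hg i).integrable_mul (test_memLp h1 h2)).const_mul _
  · exact fun i _ => (hf.integrable_mul (test_deriv_memLp h1 h2 _)).const_mul _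

lemma WD.sum_fun {f g : Fin 3 → E3 → ℝ} (hf : ∀ i, MemLp (f i) 2 volume)
    (hg : ∀ i, MemLp (g i) 2 volume) {v : E3} (h : ∀ i, WD (f i) v (g i)) (a : Fin 3 → ℝ) :
    WD (fun x => ∑ i, a i * f i x) v (fun x => ∑ i, a i * g i x) := by
  intro ϑ h1 h2
  have e1 : ∀ x, (∑ i, a i * f i x) * fderiv ℝ ϑ x v
      = ∑ i, a i * (f i x * fderiv ℝ ϑ x v) := by
    intro x; rw [Finset.sum_mul]; refine Finset.sum_congr rfl fun i _ => by ring
  have e2 : ∀ x, (∑ i, a i * g i x) * ϑ x = ∑ i, a i * (g i x * ϑ x) := by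
    intro x; rw [Finset.sum_mul]; refine Finset.sum_congr rfl fun i _ => by ring
  simp only [e1, e2]
  rw [integral_finsetSum, integral_finsetSum, ← Finset.sum_neg_distrib]
  · refine Finset.sum_congr rfl fun i _ => ?_
    rw [integral_const_mul, integral_const_mul, h i ϑ h1 h2]; ring
  · exact fun i _ => ((hg i).integrable_mul (test_memLp h1 h2)).const_mul _
  · exact fun i _ => ((hf i).integrable_mul (test_deriv_memLp h1 h2 _)).const_mul _

lemma WD.congr {f f' g g' : E3 → ℝ} {v : E3} (h : WD f v g) (hf : f =ᵐ[volume] f')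
    (hg : g =ᵐ[volume] g') : WD f' v g' := by
  intro ϑ h1 h2
  have a1 : ∫ x, f x * fderiv ℝ ϑ x v = ∫ x, f' x * fderiv ℝ ϑ x v :=
    integral_congr_ae (by filter_upwards [hf] with x hx; rw [hx])
  have a2 : ∫ x, g x * ϑ x = ∫ x, g' x * ϑ x :=
    integral_congr_ae (by filter_upwards [hg] with x hx; rw [hx])
  rw [← a1, ← a2]
  exact h ϑ h1 h2

lemma WD.smul_dir {f g : E3 → ℝ} {v : E3} (h : WD f v g) (t : ℝ) :
    WD f (t • v) (fun x => t * g x) := by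
  intro ϑ h1 h2
  simp only [map_smul, smul_eq_mul, mul_assoc]
  rw [integral_const_mul, ← mul_neg, ← h ϑ h1 h2, ← integral_const_mul]
  congr 1; ext x; ring

lemma WD.comp_isom {f g : E3 → ℝ} {v : E3} (h : WD f v g) (R : E3 ≃ₗᵢ[ℝ] E3) :
    WD (fun x => f (R x)) (R.symm v) (fun x => g (R x)) := by
  intro ϑ h1 h2
  have h3 : ContDiff ℝ (⊤ : ℕ∞) (fun x => ϑ (R.symm x)) :=
    h1.comp R.symm.toContinuousLinearEquiv.contDiff
  have h4 : HasCompactSupport (fun x => ϑ (R.symm x)) :=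
    h2.comp_homeomorph R.symm.toHomeomorph
  have h5 := h _ h3 h4
  have e : ∀ x, fderiv ℝ (fun x => ϑ (R.symm x)) x v = fderiv ℝ ϑ (R.symm x) (R.symm v) := by
    intro x
    have d1 : HasFDerivAt ϑ (fderiv ℝ ϑ (R.symm x)) (R.symm x) :=
      ((h1.differentiable (by simp)) _).hasFDerivAt
    have d2 := d1.comp x R.symm.toContinuousLinearEquiv.hasFDerivAt
    have := d2.fderiv
    simp only [Function.comp_def] at this
    erw [this]
    rfl
  simp only [e] at h5
  have m := R.measurePreserving
  have me := R.toHomeomorph.measurableEmbedding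
  rw [← m.integral_comp me (fun x => f x * fderiv ℝ ϑ (R.symm x) (R.symm v)),
    ← m.integral_comp me (fun x => g x * ϑ (R.symm x))] at h5
  simpa using h5

lemma WD.unique {f g g' : E3 → ℝ} {v : E3} (h : WD f v g) (h' : WD f v g')
    (hg : MemLp g 2 volume) (hg' : MemLp g' 2 volume) : g =ᵐ[volume] g' := by
  refine ae_eq_of_integral_contDiff_smul_eq (hg.locallyIntegrable (by norm_num))
    (hg'.locallyIntegrable (by norm_num)) fun ϑ h1 h2 => ?_
  have a := h ϑ h1 h2
  have b := h' ϑ h1 h2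
  simp only [smul_eq_mul, mul_comm (ϑ _)]
  linarith

/-- translation on L² -/
def Tr (y : E3) : HH →ₗᵢ[ℝ] HH :=
  Lp.compMeasurePreservingₗᵢ ℝ (fun x => x - y) (measurePreserving_sub_right volume y)

lemma Tr_coe (y : E3) (F : HH) : Tr y F =ᵐ[volume] fun x => F (x - y) :=
  Lp.coeFn_compMeasurePreserving F (measurePreserving_sub_right volume y)

lemma inner_HH (F G : HH) : inner ℝ F G = ∫ x, F x * G x := by
  rw [L2.inner_def]; congr 1; ext x; simp [mul_comm]

lemma Tr_zero (F : HH) : Tr 0 F = F := by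
  apply Lp.ext
  filter_upwards [Tr_coe 0 F] with x hx
  rw [hx]; simp

lemma Tr_add (y z : E3) (F : HH) : Tr y (Tr z F) = Tr (y + z) F := by
  apply Lp.ext
  have := (measurePreserving_sub_right volume y).quasiMeasurePreserving.ae (Tr_coe z F)
  filter_upwards [Tr_coe (y+z) F, Tr_coe y (Tr z F), this] with x h1 h2 h3
  rw [h1, h2, h3]; congr 1; abel

lemma inner_Tr_left (y : E3) (F G : HH) : inner ℝ (Tr y F) G = inner ℝ F (Tr (-y) G) := by
  rw [← (Tr (-y)).inner_map_map (Tr y F) G, Tr_add, neg_add_cancel, Tr_zero]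

lemma deriv_test (F G : HH) (y : E3) (h : WD F y G) (ϑ : E3 → ℝ)
    (h1 : ContDiff ℝ (⊤ : ℕ∞) ϑ) (h2 : HasCompactSupport ϑ) (Θ : HH) (hΘ : Θ =ᵐ[volume] ϑ)
    (t : ℝ) :
    HasDerivAt (fun t : ℝ => inner ℝ Θ (Tr (t • y) F)) (- inner ℝ Θ (Tr (t • y) G)) t := by
  have in_eq : ∀ (s : ℝ) (K : HH), inner ℝ Θ (Tr (s • y) K) = ∫ x, ϑ x * K (x - s • y) := by
    intro s K
    rw [inner_HH]
    refine integral_congr_ae ?_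
    filter_upwards [hΘ, Tr_coe (s • y) K] with x a b
    rw [a, b]
  have hneg : MemLp (fun x => F (-x)) 2 volume :=
    (Lp.memLp F).comp_measurePreserving (Measure.measurePreserving_neg volume)
  have hloc : LocallyIntegrable (fun x => F (-x)) volume := hneg.locallyIntegrable (by norm_num)
  have h1' : ContDiff ℝ 1 ϑ := h1.of_le (by simp)
  have D := h2.hasFDerivAt_convolution_left (ContinuousLinearMap.mul ℝ ℝ) (μ := volume) h1' hloc
    (t • y)
  have D2 := D.comp_hasDerivAt t ((hasDerivAt_id t).smul_const y)
  have e1 : ((convolution ϑ (fun x => F (-x)) (ContinuousLinearMap.mul ℝ ℝ) volume) ∘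
      fun s : ℝ => id s • y) = fun s : ℝ => inner ℝ Θ (Tr (s • y) F) := by
    ext s
    simp only [Function.comp, convolution_def, in_eq, ContinuousLinearMap.mul_apply', neg_sub, id]
  rw [e1] at D2
  refine D2.congr_deriv ?_
  symm
  rw [convolution_def, ContinuousLinearMap.integral_apply]
  · simp only [ContinuousLinearMap.precompL_apply, ContinuousLinearMap.mul_apply', neg_sub, one_smul]
    rw [in_eq]
    have k := h (fun x => ϑ (x + t • y)) (by fun_prop)
      (h2.comp_homeomorph (Homeomorph.addRight (t • y)))
    simp only [fderiv_comp_add_right] at k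
    rw [← integral_sub_right_eq_self _ (t • y), ← integral_sub_right_eq_self
      (fun x => G x * ϑ (x + t • y)) (t • y)] at k
    simp only [sub_add_cancel] at k
    simp only [mul_comm (ϑ _), mul_comm (fderiv ℝ ϑ _ _)]
    exact k.symm
  · exact (h2.fderiv (𝕜 := ℝ)).convolutionExists_left _ (h1.continuous_fderiv (by simp)) hloc _

lemma key_test (F G c : HH) (y : E3) (h : WD F y G) (ϑ : E3 → ℝ)
    (h1 : ContDiff ℝ (⊤ : ℕ∞) ϑ) (h2 : HasCompactSupport ϑ) (Θ : HH) (hΘ : Θ =ᵐ[volume] ϑ)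
    (B : ℝ) (hB : ∀ t ∈ Set.Icc (0:ℝ) 1, |inner ℝ Θ (Tr (t • y) G - c)| ≤ B) :
    |inner ℝ Θ (F - Tr y F - c)| ≤ B := by
  have D : ∀ t : ℝ, HasDerivAt (fun t : ℝ => - inner ℝ Θ (Tr (t • y) F) - t * inner ℝ Θ c)
      (inner ℝ Θ (Tr (t • y) G - c)) t := by
    intro t
    have := ((deriv_test F G y h ϑ h1 h2 Θ hΘ t).neg).sub
      ((hasDerivAt_id t).mul_const (inner ℝ Θ c))
    refine this.congr_deriv ?_
    rw [inner_sub_right]; ring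
  have M := norm_image_sub_le_of_norm_deriv_le_segment_01'
    (fun t _ => (D t).hasDerivWithinAt) (C := B)
    (fun t ht => by rw [Real.norm_eq_abs]; exact hB t ⟨ht.1, ht.2.le⟩)
  rw [Real.norm_eq_abs] at M
  convert M using 2
  simp only [one_smul, zero_smul, Tr_zero, inner_sub_right]; ring

lemma key (F G c : HH) (y : E3) (h : WD F y G) (ψ : HH)
    (B : ℝ) (hB : ∀ t ∈ Set.Icc (0:ℝ) 1, |inner ℝ ψ (Tr (t • y) G - c)| ≤ B) :
    |inner ℝ ψ (F - Tr y F - c)| ≤ B := by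
  set K : ℝ := ‖G‖ + ‖c‖ + ‖F - Tr y F - c‖ with hK
  have hK0 : 0 ≤ K := by positivity
  refine le_of_forall_pos_le_add fun ε hε => ?_
  obtain ⟨Θ, ⟨ϑ, hΘ, h2, h1⟩, hd⟩ :=
    (Lp.dense_hasCompactSupport_contDiff (E := E3) (F := ℝ) (μ := volume) (p := 2)
      (by norm_num)).exists_dist_lt ψ (ε := ε / (K + 1)) (by positivity)
  rw [dist_eq_norm] at hd
  have hd' : ‖ψ - Θ‖ * K ≤ ε := by
    have : ‖ψ - Θ‖ * K ≤ (ε / (K+1)) * (K + 1) := by gcongr; linarith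
    rwa [div_mul_cancel₀ _ (by positivity)] at this
  have main := key_test F G c y h ϑ h1 h2 Θ hΘ (B + ‖ψ - Θ‖ * (‖G‖ + ‖c‖)) (by
    intro t ht
    have e : inner ℝ Θ (Tr (t • y) G - c) = inner ℝ ψ (Tr (t • y) G - c)
      - inner ℝ (ψ - Θ) (Tr (t • y) G - c) := by rw [inner_sub_left]; ring
    rw [e]
    refine (abs_sub _ _).trans (add_le_add (hB t ht) ?_)
    refine (abs_real_inner_le_norm _ _).trans ?_
    gcongr
    refine (norm_sub_le _ _).trans ?_
    rw [LinearIsometry.norm_map])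
  have e : inner ℝ ψ (F - Tr y F - c) = inner ℝ Θ (F - Tr y F - c)
      + inner ℝ (ψ - Θ) (F - Tr y F - c) := by rw [inner_sub_left]; ring
  rw [e]
  refine (abs_add_le _ _).trans ((add_le_add main (abs_real_inner_le_norm _ _)).trans ?_)
  rw [hK] at hd'
  linarith

lemma le_of_sq {a b : ℝ} (hb : 0 ≤ b) (h : a * a ≤ a * b) : a ≤ b := by
  by_contra hh; push Not at hh; nlinarith

lemma first_order (F G : HH) (y : E3) (h : WD F y G) : ‖F - Tr y F‖ ≤ ‖G‖ := by
  have := key F G 0 y h (F - Tr y F) (‖F - Tr y F‖ * ‖G‖) (by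
    intro t _
    refine (abs_real_inner_le_norm _ _).trans ?_
    rw [sub_zero, LinearIsometry.norm_map])
  rw [sub_zero, real_inner_self_eq_norm_mul_norm, abs_of_nonneg (by positivity)] at this
  exact le_of_sq (norm_nonneg _) this

lemma first_order_t (F G : HH) (y : E3) (h : WD F y G) (t : ℝ) (ht : t ∈ Set.Icc (0:ℝ) 1) :
    ‖F - Tr (t • y) F‖ ≤ ‖G‖ := by
  have h' : WD F (t • y) (t • G : HH) :=
    (h.smul_dir t).congr (Filter.EventuallyEq.refl _ _) (by
      filter_upwards [Lp.coeFn_smul t G] with x hx; rw [hx]; rfl)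
  refine (first_order F _ _ h').trans ?_
  rw [norm_smul, Real.norm_of_nonneg ht.1]
  exact mul_le_of_le_one_left (norm_nonneg _) ht.2

lemma second_order (F G G2 : HH) (y : E3) (h : WD F y G) (h2 : WD G y G2) :
    ‖F - Tr y F - G‖ ≤ ‖G2‖ := by
  have := key F G G y h (F - Tr y F - G) (‖F - Tr y F - G‖ * ‖G2‖) (by
    intro t ht
    refine (abs_real_inner_le_norm _ _).trans ?_
    gcongr
    rw [norm_sub_rev]
    exact first_order_t G G2 y h2 t ht)
  rw [real_inner_self_eq_norm_mul_norm, abs_of_nonneg (by positivity)] at this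
  exact le_of_sq (norm_nonneg _) this

/-- symmetrised third order estimate -/
lemma third_order (F G G2 ψ ψ1 : HH) (y : E3) (h : WD F y G) (h2 : WD G y G2) (h3 : WD ψ y ψ1)
    (heven : ∀ z, inner ℝ ψ (Tr z G) = inner ℝ ψ (Tr (-z) G)) :
    |inner ℝ ψ (F - Tr y F - G)| ≤ ‖ψ1‖ * ‖G2‖ := by
  refine key F G G y h ψ _ ?_
  intro t ht
  have e : inner ℝ ψ (Tr (t • y) G - G) = -(1/2) * inner ℝ (ψ - Tr (t • y) ψ) (G - Tr (t • y) G) := by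
    simp only [inner_sub_left, inner_sub_right, LinearIsometry.inner_map_map, inner_Tr_left]
    rw [← heven]; ring
  rw [e, abs_mul]
  have : |(-(1/2) : ℝ)| ≤ 1 := by norm_num [abs_of_neg]
  refine (mul_le_of_le_one_left (abs_nonneg _) this).trans ((abs_real_inner_le_norm _ _).trans ?_)
  gcongr
  · exact first_order_t ψ ψ1 y h3 t ht
  · exact first_order_t G G2 y h2 t ht

lemma coe_sum3 (a : Fin 3 → ℝ) (A : Fin 3 → HH) :
    ((∑ i, a i • A i : HH) : E3 → ℝ) =ᵐ[volume] fun x => ∑ i, a i * A i x := by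
  simp only [Fin.sum_univ_three]
  filter_upwards [Lp.coeFn_add (a 0 • A 0 + a 1 • A 1) (a 2 • A 2),
    Lp.coeFn_add (a 0 • A 0) (a 1 • A 1), Lp.coeFn_smul (a 0) (A 0), Lp.coeFn_smul (a 1) (A 1),
    Lp.coeFn_smul (a 2) (A 2)] with x h1 h2 h3 h4 h5
  rw [h1, Pi.add_apply, h2, Pi.add_apply, h3, h4, h5]
  simp

lemma WL_dir {F : HH} {A : Fin 3 → HH} (h : ∀ i, WD F (EuclideanSpace.single i 1) (A i)) (y : E3) :
    WD F y (∑ i, y i • A i : HH) :=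
  (WD.sum_dir (Lp.memLp F) (fun i => Lp.memLp (A i)) h y).congr (Filter.EventuallyEq.refl _ _)
    (coe_sum3 y A).symm

lemma WL_fun {F A : Fin 3 → HH} {v : E3} (h : ∀ i, WD (F i) v (A i)) (a : Fin 3 → ℝ) :
    WD (∑ i, a i • F i : HH) v (∑ i, a i • A i : HH) :=
  (WD.sum_fun (fun i => Lp.memLp (F i)) (fun i => Lp.memLp (A i)) h a).congr
    (coe_sum3 a F).symm (coe_sum3 a A).symm

lemma even_inner (ψ G : HH) (h1 : ∀ᵐ x, ψ (-x) = - ψ x) (h2 : ∀ᵐ x, G (-x) = - G x) (z : E3) :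
    inner ℝ ψ (Tr z G) = inner ℝ ψ (Tr (-z) G) := by
  have e : ∀ z, inner ℝ ψ (Tr z G) = ∫ x, ψ x * G (x - z) := by
    intro z
    rw [inner_HH]
    refine integral_congr_ae ?_
    filter_upwards [Tr_coe z G] with x hx
    rw [hx]
  rw [e, e, ← integral_neg_eq_self]
  refine integral_congr_ae ?_
  have h3 := (measurePreserving_add_right volume z).quasiMeasurePreserving.ae h2
  filter_upwards [h1, h3] with x a b
  rw [a, sub_neg_eq_add, show -x - z = -(x + z) by abel, b]; ring

section sym
variable {φ : E3 → ℝ}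

lemma refl_inv (hradial : ∀ R : E3 ≃ₗᵢ[ℝ] E3,
      LinearMap.det (R.toLinearEquiv : E3 →ₗ[ℝ] E3) = 1 → ∀ x, φ (R x) = φ x)
    (v : E3) (hv : v ≠ 0) (x : E3) : φ ((ℝ ∙ v)ᗮ.reflection x) = φ x := by
  have hx : (ℝ ∙ x)ᗮ ≠ ⊥ := by
    intro h
    rw [Submodule.orthogonal_eq_bot_iff] at h
    have h1 : Module.finrank ℝ (ℝ ∙ x) ≤ 1 := (finrank_span_le_card ({x} : Set E3)).trans (by simp)
    rw [h, finrank_top, finrank_euclideanSpace_fin] at h1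
    omega
  obtain ⟨u, hu, hu0⟩ := Submodule.exists_mem_ne_zero_of_ne_bot hx
  have hxu : (ℝ ∙ u)ᗮ.reflection x = x := by
    apply Submodule.reflection_mem_subspace_eq_self
    rw [Submodule.mem_orthogonal_singleton_iff_inner_right]
    rw [Submodule.mem_orthogonal_singleton_iff_inner_right] at hu
    rw [real_inner_comm]; exact hu
  have hdet : ∀ w : E3, w ≠ 0 →
      LinearMap.det ((ℝ ∙ w)ᗮ.reflection.toLinearEquiv : E3 →ₗ[ℝ] E3) = -1 := by
    intro w hw
    have := Submodule.det_reflection (𝕜 := ℝ) ((ℝ ∙ w)ᗮ)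
    rw [Submodule.orthogonal_orthogonal, finrank_span_singleton hw, pow_one] at this
    exact this
  have h := hradial ((ℝ ∙ u)ᗮ.reflection.trans (ℝ ∙ v)ᗮ.reflection) (by
    have : (((ℝ ∙ u)ᗮ.reflection.trans (ℝ ∙ v)ᗮ.reflection).toLinearEquiv : E3 →ₗ[ℝ] E3)
      = ((ℝ ∙ v)ᗮ.reflection.toLinearEquiv : E3 →ₗ[ℝ] E3) ∘ₗ
        ((ℝ ∙ u)ᗮ.reflection.toLinearEquiv : E3 →ₗ[ℝ] E3) := by
      ext; rfl
    rw [this, LinearMap.det_comp, hdet u hu0, hdet v hv]; norm_num) x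
  rw [LinearIsometryEquiv.trans_apply, hxu] at h
  exact h

lemma even_of_refl (hr : ∀ v : E3, v ≠ 0 → ∀ x, φ ((ℝ ∙ v)ᗮ.reflection x) = φ x) (x : E3) :
    φ (-x) = φ x := by
  by_cases hx : x = 0
  · simp [hx]
  · have := hr x hx x
    rwa [Submodule.reflection_orthogonalComplement_singleton_eq_neg] at this

variable {φ1 : Fin 3 → E3 → ℝ}

lemma comp_memLp {g : E3 → ℝ} (hg : MemLp g 2 volume) (R : E3 ≃ₗᵢ[ℝ] E3) :
    MemLp (fun x => g (R x)) 2 volume := hg.comp_measurePreserving R.measurePreserving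

lemma grad_odd (hφ1 : ∀ i, MemLp (φ1 i) 2 volume)
    (hw : ∀ i, WD φ (EuclideanSpace.single i 1) (φ1 i)) (he : ∀ x, φ (-x) = φ x) (i : Fin 3) :
    ∀ᵐ x, φ1 i (-x) = - φ1 i x := by
  have h1 := (hw i).comp_isom (LinearIsometryEquiv.neg ℝ)
  simp only [LinearIsometryEquiv.coe_neg, he, LinearIsometryEquiv.symm_neg] at h1
  have h2 := (hw i).smul_dir (-1)
  simp only [neg_smul, one_smul] at h2
  have := h1.unique h2 (comp_memLp (hφ1 i) (LinearIsometryEquiv.neg ℝ)) ((hφ1 i).const_mul _)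
  filter_upwards [this] with x hx
  rw [hx]; ring

lemma grad_ortho (hφ1 : ∀ i, MemLp (φ1 i) 2 volume)
    (hw : ∀ i, WD φ (EuclideanSpace.single i 1) (φ1 i))
    (hr : ∀ v : E3, v ≠ 0 → ∀ x, φ ((ℝ ∙ v)ᗮ.reflection x) = φ x) (i j : Fin 3) (hij : i ≠ j) :
    ∫ x, φ1 i x * φ1 j x = 0 := by
  have h0 : (EuclideanSpace.single i (1:ℝ) : E3) ≠ 0 := by
    intro h; have := congrArg (fun z : E3 => z i) h; simp at this
  set R := (ℝ ∙ (EuclideanSpace.single i (1:ℝ) : E3))ᗮ.reflection with hR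
  have hs : R.symm = R := Submodule.reflection_symm
  have Ri : R (EuclideanSpace.single i 1) = - EuclideanSpace.single i 1 :=
    Submodule.reflection_orthogonalComplement_singleton_eq_neg _
  have Rj : R (EuclideanSpace.single j 1) = EuclideanSpace.single j 1 := by
    apply Submodule.reflection_mem_subspace_eq_self
    rw [Submodule.mem_orthogonal_singleton_iff_inner_right]
    simp [EuclideanSpace.inner_single_left, hij]
  have hinv : ∀ x, φ (R x) = φ x := hr _ h0
  have a := (hw i).comp_isom R
  have b := (hw j).comp_isom R
  simp only [hs, hinv, Ri, Rj] at a b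
  have a2 := (hw i).smul_dir (-1)
  simp only [neg_smul, one_smul] at a2
  have ea := a.unique a2 (comp_memLp (hφ1 i) R) ((hφ1 i).const_mul _)
  have eb := b.unique (hw j) (comp_memLp (hφ1 j) R) (hφ1 j)
  have e := R.measurePreserving.integral_comp R.toHomeomorph.measurableEmbedding
    (fun x => φ1 i x * φ1 j x)
  have e2 : ∫ x, φ1 i (R x) * φ1 j (R x) = ∫ x, - (φ1 i x * φ1 j x) := by
    refine integral_congr_ae ?_
    filter_upwards [ea, eb] with x h1 h2
    rw [h1, h2]; ring
  rw [integral_neg] at e2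
  have e3 : ∫ x, φ1 i (R x) * φ1 j (R x) = ∫ x, φ1 i x * φ1 j x := e
  linarith

lemma grad_eq (hφ1 : ∀ i, MemLp (φ1 i) 2 volume)
    (hw : ∀ i, WD φ (EuclideanSpace.single i 1) (φ1 i))
    (hr : ∀ v : E3, v ≠ 0 → ∀ x, φ ((ℝ ∙ v)ᗮ.reflection x) = φ x) (i j : Fin 3) :
    ∫ x, φ1 i x * φ1 i x = ∫ x, φ1 j x * φ1 j x := by
  by_cases hij : i = j
  · rw [hij]
  have h0 : (EuclideanSpace.single i (1:ℝ) : E3) - EuclideanSpace.single j 1 ≠ 0 := by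
    intro h; have := congrArg (fun z : E3 => z i) h; simp [hij] at this
  set R := (ℝ ∙ ((EuclideanSpace.single i (1:ℝ) : E3) - EuclideanSpace.single j 1))ᗮ.reflection
    with hR
  have hs : R.symm = R := Submodule.reflection_symm
  have Ri : R (EuclideanSpace.single i 1) = EuclideanSpace.single j 1 :=
    Submodule.reflection_sub (by simp)
  have hinv : ∀ x, φ (R x) = φ x := hr _ h0
  have a := (hw i).comp_isom R
  simp only [hs, hinv, Ri] at a
  have ea := a.unique (hw j) (comp_memLp (hφ1 i) R) (hφ1 j)
  have e : ∫ x, φ1 i (R x) * φ1 i (R x) = ∫ x, φ1 i x * φ1 i x :=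
    R.measurePreserving.integral_comp R.toHomeomorph.measurableEmbedding
    (fun x => φ1 i x * φ1 i x)
  rw [← e]
  refine integral_congr_ae ?_
  filter_upwards [ea] with x h1
  rw [h1]
end sym

section hilbert

lemma gram_norm (A : Fin 3 → HH) (m : ℝ)
    (hg : ∀ i j, inner ℝ (A i) (A j) = if i = j then m else 0) (a : Fin 3 → ℝ) :
    ‖∑ i, a i • A i‖ ^ 2 = m * ∑ i, a i ^ 2 := by
  rw [← real_inner_self_eq_norm_sq]
  simp only [sum_inner, inner_sum, real_inner_smul_left, real_inner_smul_right, hg]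
  simp [Fin.sum_univ_three]; ring

lemma gram_coef (A : Fin 3 → HH) (m : ℝ)
    (hg : ∀ i j, inner ℝ (A i) (A j) = if i = j then m else 0) (a : Fin 3 → ℝ) (i : Fin 3) :
    inner ℝ (A i) (∑ j, a j • A j) = m * a i := by
  simp only [inner_sum, real_inner_smul_right, hg]
  simp [mul_comm]

lemma proj_min (A : Fin 3 → HH) (u : HH) (a b : Fin 3 → ℝ)
    (h : ∀ i, inner ℝ (A i) (u - ∑ j, a j • A j) = 0) :
    ‖u - ∑ j, a j • A j‖ ^ 2 + ‖∑ j, (a j - b j) • A j‖ ^ 2 = ‖u - ∑ j, b j • A j‖ ^ 2 := by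
  have e : u - ∑ j, b j • A j = (u - ∑ j, a j • A j) + ∑ j, (a j - b j) • A j := by
    simp only [sub_smul, Finset.sum_sub_distrib]; abel
  rw [e, norm_add_sq_real]
  have : inner ℝ (u - ∑ j, a j • A j) (∑ j, (a j - b j) • A j) = 0 := by
    simp only [inner_sum, real_inner_smul_right]
    refine Finset.sum_eq_zero fun i _ => ?_
    rw [real_inner_comm, h i, mul_zero]
  rw [this]; ring

lemma scalar_end {T N K q S R4 R6 : ℝ} (hK : 0 ≤ K) (hq : 0 ≤ q) (ts : 0 ≤ S) (t4 : 0 ≤ R4)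
    (t6 : 0 ≤ R6) (hN : 0 ≤ N) (tot : |T| ≤ 6 * K * R4 + q * R6) (hb2 : N ≤ K ^ 2 * S) :
    |T + N| ≤ (K ^ 2 + 6 * K + q + 1) * (S + R4 + R6) := by
  refine (abs_add_le _ _).trans ?_
  rw [abs_of_nonneg hN]
  have hK2 : 0 ≤ K ^ 2 := sq_nonneg K
  have := mul_nonneg hq t4
  have := mul_nonneg hq ts
  have := mul_nonneg hK t6
  have := mul_nonneg hK ts
  have := mul_nonneg hK2 t4
  have := mul_nonneg hK2 t6
  linarith [tot, hb2]

set_option maxHeartbeats 2000000 in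
lemma final_est (A : Fin 3 → HH) (m : ℝ) (hm : 0 < m)
    (hg : ∀ i j, inner ℝ (A i) (A j) = if i = j then m else 0)
    (u v : HH) (a b : Fin 3 → ℝ) (y : E3) (K s : ℝ) (hK : 0 ≤ K)
    (ha : ∀ i, inner ℝ (A i) (u - ∑ j, a j • A j) = 0)
    (hb : ∀ i, inner ℝ (A i) (v - ∑ j, b j • A j) = 0)
    (h2 : ‖u - ∑ j, y j • A j‖ ≤ K * ‖y‖ ^ 2)
    (h3 : ∀ i, |inner ℝ (A i) (u - ∑ j, y j • A j)| ≤ K * ‖y‖ ^ 3)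
    (hv : ‖v‖ ≤ K * s) :
    ‖u - ∑ j, a j • A j‖ ^ 2 + ‖v - ∑ j, b j • A j‖ ^ 2 ≤
      (K ^ 2 + 6 * K + 3 * K ^ 2 / m + 1) * (s ^ 2 + ‖y‖ ^ 4) ∧
    |(‖∑ j, a j • A j‖ ^ 2 + ‖∑ j, b j • A j‖ ^ 2) - m * ‖y‖ ^ 2| ≤
      (K ^ 2 + 6 * K + 3 * K ^ 2 / m + 1) * (s ^ 2 + ‖y‖ ^ 4 + ‖y‖ ^ 6) := by
  have pu := proj_min A u a y ha
  have pv := proj_min A v b 0 hb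
  simp only [Pi.zero_apply, sub_zero, zero_smul, Finset.sum_const_zero] at pv
  have hv2 : ‖v‖ ^ 2 ≤ K ^ 2 * s ^ 2 := by
    rw [← mul_pow]; exact pow_le_pow_left₀ (norm_nonneg _) hv 2
  have hu2 : ‖u - ∑ j, y j • A j‖ ^ 2 ≤ K ^ 2 * ‖y‖ ^ 4 := by
    calc _ ≤ (K * ‖y‖ ^ 2) ^ 2 := pow_le_pow_left₀ (norm_nonneg _) h2 2
      _ = _ := by ring
  have hq : 0 ≤ 3 * K ^ 2 / m := by positivity
  have hr := norm_nonneg y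
  set r := ‖y‖ with hrdef
  have t4 : 0 ≤ r ^ 4 := by positivity
  have t6 : 0 ≤ r ^ 6 := by positivity
  have ts : 0 ≤ s ^ 2 := by positivity
  constructor
  · have := sq_nonneg ‖∑ j, (a j - y j) • A j‖
    have := sq_nonneg ‖∑ j, b j • A j‖
    nlinarith [mul_nonneg hq t4, mul_nonneg hq ts, mul_nonneg hK t4, mul_nonneg hK ts]
  · have hy : r ^ 2 = ∑ i, y i ^ 2 := by
      rw [hrdef, EuclideanSpace.norm_sq_eq]; simp
    have hyi : ∀ i, |y i| ≤ r := fun i => by simpa using PiLp.norm_apply_le y i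
    set e : Fin 3 → ℝ := fun i => inner ℝ (A i) (u - ∑ j, y j • A j) with he
    have hae : ∀ i, a i = y i + e i / m := by
      intro i
      have h := ha i
      rw [inner_sub_right, gram_coef A m hg] at h
      simp only [he, inner_sub_right, gram_coef A m hg]
      field_simp; linarith
    rw [gram_norm A m hg a]
    have hb2 : ‖∑ j, b j • A j‖ ^ 2 ≤ K ^ 2 * s ^ 2 := by
      have := sq_nonneg ‖v - ∑ j, b j • A j‖
      linarith
    have main : m * ∑ i, a i ^ 2 - m * r ^ 2 = ∑ i, (2 * y i * e i + e i ^ 2 / m) := by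
      rw [hy, Finset.mul_sum, Finset.mul_sum, ← Finset.sum_sub_distrib]
      refine Finset.sum_congr rfl fun i _ => ?_
      rw [hae i]; field_simp; ring
    have each : ∀ i, |2 * y i * e i + e i ^ 2 / m| ≤ 2 * K * r ^ 4 + K ^ 2 / m * r ^ 6 := by
      intro i
      refine (abs_add_le _ _).trans (add_le_add ?_ ?_)
      · rw [abs_mul, abs_mul, abs_two]
        calc 2 * |y i| * |e i| ≤ 2 * r * (K * r ^ 3) := by
              gcongr
              · exact hyi i
              · exact h3 i
          _ = _ := by ring
      · rw [abs_of_nonneg (by positivity), ← sq_abs]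
        calc |e i| ^ 2 / m ≤ (K * r ^ 3) ^ 2 / m := by
              gcongr; exact h3 i
          _ = _ := by ring
    have tot : |∑ i, (2 * y i * e i + e i ^ 2 / m)| ≤ 6 * K * r ^ 4 + 3 * K ^ 2 / m * r ^ 6 := by
      refine (Finset.abs_sum_le_sum_abs _ _).trans ((Finset.sum_le_sum fun i _ => each i).trans ?_)
      simp only [Finset.sum_const, Finset.card_univ, Fintype.card_fin, nsmul_eq_mul]
      apply le_of_eq; push_cast; ring
    have : (m * ∑ i, a i ^ 2 + ‖∑ j, b j • A j‖ ^ 2) - m * r ^ 2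
      = (∑ i, (2 * y i * e i + e i ^ 2 / m)) + ‖∑ j, b j • A j‖ ^ 2 := by rw [← main]; ring
    rw [this]
    exact scalar_end hK hq ts t4 t6 (sq_nonneg _) tot hb2
end hilbert

lemma cplx_norm (f : E3 → ℂ) (U V : HH) (h : ∀ᵐ x, f x = (U x : ℂ) + (V x : ℂ) * Complex.I) :
    ∫ x, ‖f x‖ ^ 2 = ‖U‖ ^ 2 + ‖V‖ ^ 2 := by
  rw [← real_inner_self_eq_norm_sq, ← real_inner_self_eq_norm_sq, inner_HH, inner_HH,
    ← integral_add]
  · refine integral_congr_ae ?_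
    filter_upwards [h] with x hx
    rw [hx, ← Complex.normSq_eq_norm_sq, Complex.normSq_add_mul_I]; ring
  · exact (Lp.memLp U).integrable_mul (Lp.memLp U)
  · exact (Lp.memLp V).integrable_mul (Lp.memLp V)

lemma cplx_orth (f : E3 → ℂ) (g : E3 → ℝ) (A U V : HH) (hA : A =ᵐ[volume] g)
    (h : ∀ᵐ x, f x = (U x : ℂ) + (V x : ℂ) * Complex.I)
    (h0 : ∫ x, conj ((g x : ℂ)) * f x = 0) : inner ℝ A U = 0 ∧ inner ℝ A V = 0 := by
  have e : ∫ x, conj ((g x : ℂ)) * f x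
      = ∫ x, (((A x * U x : ℝ) : ℂ) + ((A x * V x : ℝ) : ℂ) * Complex.I) := by
    refine integral_congr_ae ?_
    filter_upwards [h, hA] with x hx hx2
    rw [hx, Complex.conj_ofReal, hx2]; push_cast; ring
  rw [integral_add ((Lp.memLp A).integrable_mul (Lp.memLp U)).ofReal
    (((Lp.memLp A).integrable_mul (Lp.memLp V)).ofReal.mul_const _), integral_mul_const,
    integral_complex_ofReal, integral_complex_ofReal, ← inner_HH, ← inner_HH, h0] at e
  have a := congrArg Complex.re e
  have b := congrArg Complex.im e
  simp at a b
  exact ⟨a.symm, b.symm⟩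

set_option maxHeartbeats 4000000 in
lemma main_est
    (φ : E3 → ℝ) (φ1 : Fin 3 → E3 → ℝ) (φ2 : Fin 3 → Fin 3 → E3 → ℝ)
    (hφ : MemLp φ 2 volume)
    (hφ1 : ∀ i, MemLp (φ1 i) 2 volume)
    (hφ2 : ∀ i j, MemLp (φ2 i j) 2 volume)
    (hw1 : ∀ i, WD φ (EuclideanSpace.single i 1) (φ1 i))
    (hw2 : ∀ i j, WD (φ1 i) (EuclideanSpace.single j 1) (φ2 i j))
    (hradial : ∀ R : E3 ≃ₗᵢ[ℝ] E3,
      LinearMap.det (R.toLinearEquiv : E3 →ₗ[ℝ] E3) = 1 → ∀ x, φ (R x) = φ x)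
    (hgrad : 0 < ∫ x, ∑ i, φ1 i x ^ 2)
    (m M : ℝ)
    (hm : m = (∫ x, ∑ i, φ1 i x ^ 2) / 3)
    (hM : 0 < M) (c : ℝ) (hc : 0 < c) :
    ∃ C > 0, ∀ (α : ℝ) (P y : E3), 0 < α → ‖P‖ ≤ c * α → ∀ a b : Fin 3 → ℝ,
      ∀ u v : HH, u = hφ.toLp - Tr y hφ.toLp →
      v = (α ^ 2 * M)⁻¹ • ∑ i, P i • ((hφ1 i).toLp - Tr y (hφ1 i).toLp) →
      (∀ i, inner ℝ (hφ1 i).toLp (u - ∑ j, a j • (hφ1 j).toLp) = 0) →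
      (∀ i, inner ℝ (hφ1 i).toLp (v - ∑ j, b j • (hφ1 j).toLp) = 0) →
      ‖u - ∑ j, a j • (hφ1 j).toLp‖ ^ 2 + ‖v - ∑ j, b j • (hφ1 j).toLp‖ ^ 2 ≤
        C * ((‖y‖ / α) ^ 2 + ‖y‖ ^ 4) ∧
      |(‖∑ j, a j • (hφ1 j).toLp‖ ^ 2 + ‖∑ j, b j • (hφ1 j).toLp‖ ^ 2) - m * ‖y‖ ^ 2| ≤
        C * ((‖y‖ / α) ^ 2 + ‖y‖ ^ 4 + ‖y‖ ^ 6) := by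
  have hr := refl_inv hradial
  have hodd := grad_odd hφ1 hw1 (even_of_refl hr)
  set F : HH := hφ.toLp with hF
  set A : Fin 3 → HH := fun i => (hφ1 i).toLp with hA
  set A2 : Fin 3 → Fin 3 → HH := fun i j => (hφ2 i j).toLp with hA2
  have cF : F =ᵐ[volume] φ := hφ.coeFn_toLp
  have cA : ∀ i, A i =ᵐ[volume] φ1 i := fun i => (hφ1 i).coeFn_toLp
  have cA2 : ∀ i j, A2 i j =ᵐ[volume] φ2 i j := fun i j => (hφ2 i j).coeFn_toLp
  have hm0 : 0 < m := by rw [hm]; positivity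
  have inA : ∀ i j, inner ℝ (A i) (A j) = ∫ x, φ1 i x * φ1 j x := by
    intro i j
    rw [inner_HH]
    refine integral_congr_ae ?_
    filter_upwards [cA i, cA j] with x h1 h2
    rw [h1, h2]
  have hg : ∀ i j, inner ℝ (A i) (A j) = if i = j then m else 0 := by
    intro i j
    rw [inA]
    split_ifs with hij
    · subst hij
      have : ∫ x, ∑ i, φ1 i x ^ 2 = ∑ i, ∫ x, φ1 i x * φ1 i x := by
        rw [← integral_finsetSum]
        · simp only [sq]
        · exact fun i _ => (hφ1 i).integrable_mul (hφ1 i)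
      rw [hm, this, Finset.sum_congr rfl (fun j _ => grad_eq hφ1 hw1 hr j i)]
      simp
    · exact grad_ortho hφ1 hw1 hr i j hij
  have W1 : ∀ i, WD F (EuclideanSpace.single i 1) (A i) :=
    fun i => (hw1 i).congr cF.symm (cA i).symm
  have W2 : ∀ i j, WD (A i) (EuclideanSpace.single j 1) (A2 i j) :=
    fun i j => (hw2 i j).congr (cA i).symm (cA2 i j).symm
  have oddA : ∀ i, ∀ᵐ x, A i (-x) = - A i x := by
    intro i
    have q := (Measure.measurePreserving_neg (volume : Measure E3)).quasiMeasurePreserving.ae (cA i)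
    filter_upwards [q, cA i, hodd i] with x h1 h2 h3
    rw [h1, h2, h3]
  set S : ℝ := ∑ i, ∑ j, ‖A2 i j‖ with hS
  have hS0 : 0 ≤ S := Finset.sum_nonneg fun i _ => Finset.sum_nonneg fun j _ => norm_nonneg _
  set K : ℝ := S + S * S + c * S / M with hK
  have hcs : 0 ≤ c * S / M := by positivity
  have hK0 : 0 ≤ K := by positivity
  refine ⟨K ^ 2 + 6 * K + 3 * K ^ 2 / m + 1, by positivity, ?_⟩
  intro α P y hα hP a b u v hu hv ha hb
  have hyi : ∀ (z : E3) i, |z i| ≤ ‖z‖ := fun z i => by simpa using PiLp.norm_apply_le z i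
  have D1 : ∀ i, WD (A i) y (∑ j, y j • A2 i j : HH) := fun i => WL_dir (W2 i) y
  have D0 : WD F y (∑ j, y j • A j : HH) := WL_dir W1 y
  have D2 : WD (∑ j, y j • A j : HH) y (∑ i, y i • (∑ j, y j • A2 i j) : HH) := WL_fun D1 y
  have n1 : ∀ i, ‖∑ j, y j • A2 i j‖ ≤ ‖y‖ * ∑ j, ‖A2 i j‖ := by
    intro i
    refine (norm_sum_le _ _).trans ?_
    rw [Finset.mul_sum]
    refine Finset.sum_le_sum fun j _ => ?_
    rw [norm_smul, Real.norm_eq_abs]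
    gcongr
    exact hyi y j
  have n1' : ∀ i, ‖∑ j, y j • A2 i j‖ ≤ ‖y‖ * S := by
    intro i
    refine (n1 i).trans ?_
    gcongr
    exact Finset.single_le_sum (f := fun i => ∑ j, ‖A2 i j‖)
      (fun i _ => Finset.sum_nonneg fun j _ => norm_nonneg _) (Finset.mem_univ i)
  have nP : ∀ (z : E3) (X : Fin 3 → HH), (∀ i, ‖X i‖ ≤ ‖y‖ * ∑ j, ‖A2 i j‖) →
      ‖∑ i, z i • X i‖ ≤ ‖z‖ * (‖y‖ * S) := by
    intro z X hX
    refine (norm_sum_le _ _).trans ?_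
    rw [hS, Finset.mul_sum, Finset.mul_sum]
    refine Finset.sum_le_sum fun j _ => ?_
    rw [norm_smul, Real.norm_eq_abs]
    exact mul_le_mul (hyi z j) (hX j) (norm_nonneg _) (norm_nonneg _)
  have n2 : ‖∑ i, y i • (∑ j, y j • A2 i j)‖ ≤ ‖y‖ * (‖y‖ * S) := nP y _ n1
  have oddG : ∀ᵐ x, (∑ j, y j • A j : HH) (-x) = - (∑ j, y j • A j : HH) x := by
    have q := (Measure.measurePreserving_neg (volume : Measure E3)).quasiMeasurePreserving.ae
      (coe_sum3 y A)
    filter_upwards [q, coe_sum3 y A, oddA 0, oddA 1, oddA 2] with x h1 h2 h3 h4 h5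
    rw [h1, h2]
    simp only [Fin.sum_univ_three, h3, h4, h5]; ring
  have b2 : ‖u - ∑ j, y j • A j‖ ≤ K * ‖y‖ ^ 2 := by
    rw [hu]
    refine (second_order F _ _ y D0 D2).trans (n2.trans ?_)
    have : S * ‖y‖ ^ 2 ≤ K * ‖y‖ ^ 2 := by
      gcongr
      rw [hK]; nlinarith
    linarith
  have b3 : ∀ i, |inner ℝ (A i) (u - ∑ j, y j • A j)| ≤ K * ‖y‖ ^ 3 := by
    intro i
    rw [hu]
    refine (third_order F _ _ (A i) _ y D0 D2 (D1 i)
      (even_inner (A i) _ (oddA i) oddG)).trans ?_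
    refine (mul_le_mul (n1' i) n2 (norm_nonneg _) (by positivity)).trans ?_
    have : S * S * ‖y‖ ^ 3 ≤ K * ‖y‖ ^ 3 := by
      gcongr
      rw [hK]; linarith
    linarith
  have bv : ‖v‖ ≤ K * (‖y‖ / α) := by
    rw [hv, norm_smul, Real.norm_of_nonneg (by positivity)]
    have q := nP P (fun i => A i - Tr y (A i))
      (fun i => (first_order (A i) _ y (D1 i)).trans (n1 i))
    calc (α ^ 2 * M)⁻¹ * ‖∑ i, P i • (A i - Tr y (A i))‖
        ≤ (α ^ 2 * M)⁻¹ * ((c * α) * (‖y‖ * S)) := by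
          gcongr
          exact q.trans (by gcongr)
      _ = (c * S / M) * (‖y‖ / α) := by field_simp
      _ ≤ K * (‖y‖ / α) := by
          gcongr
          rw [hK]; nlinarith
  exact final_est A m hm0 hg u v a b y K (‖y‖ / α) hK0 ha hb b2 b3 bv

theorem statement10
    (φ : EuclideanSpace ℝ (Fin 3) → ℝ)
    (φ1 : Fin 3 → EuclideanSpace ℝ (Fin 3) → ℝ)
    (φ2 : Fin 3 → Fin 3 → EuclideanSpace ℝ (Fin 3) → ℝ)
    (φ3 : Fin 3 → Fin 3 → Fin 3 → EuclideanSpace ℝ (Fin 3) → ℝ)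
    (hφ : MemLp φ 2 volume)
    (hφ1 : ∀ i, MemLp (φ1 i) 2 volume)
    (hφ2 : ∀ i j, MemLp (φ2 i j) 2 volume)
    (hφ3 : ∀ i j k, MemLp (φ3 i j k) 2 volume)
    (hweak1 : ∀ i, ∀ ϑ : EuclideanSpace ℝ (Fin 3) → ℝ,
      ContDiff ℝ (⊤ : ℕ∞) ϑ → HasCompactSupport ϑ →
      ∫ x, φ x * fderiv ℝ ϑ x (EuclideanSpace.single i 1) = - ∫ x, φ1 i x * ϑ x)
    (hweak2 : ∀ i j, ∀ ϑ : EuclideanSpace ℝ (Fin 3) → ℝ,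
      ContDiff ℝ (⊤ : ℕ∞) ϑ → HasCompactSupport ϑ →
      ∫ x, φ1 i x * fderiv ℝ ϑ x (EuclideanSpace.single j 1) = - ∫ x, φ2 i j x * ϑ x)
    (hweak3 : ∀ i j k, ∀ ϑ : EuclideanSpace ℝ (Fin 3) → ℝ,
      ContDiff ℝ (⊤ : ℕ∞) ϑ → HasCompactSupport ϑ →
      ∫ x, φ2 i j x * fderiv ℝ ϑ x (EuclideanSpace.single k 1) = - ∫ x, φ3 i j k x * ϑ x)
    (hradial : ∀ R : EuclideanSpace ℝ (Fin 3) ≃ₗᵢ[ℝ] EuclideanSpace ℝ (Fin 3),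
      LinearMap.det (R.toLinearEquiv : EuclideanSpace ℝ (Fin 3) →ₗ[ℝ]
        EuclideanSpace ℝ (Fin 3)) = 1 → ∀ x, φ (R x) = φ x)
    (hgrad : 0 < ∫ x, ∑ i, φ1 i x ^ 2)
    (lam M : ℝ)
    (hlam : lam = (∫ x, ∑ i, φ1 i x ^ 2) / 6)
    (hM : M = (2 / 3) * ∫ x, ∑ i, φ1 i x ^ 2)
    (w : ℝ → EuclideanSpace ℝ (Fin 3) → EuclideanSpace ℝ (Fin 3) →
      EuclideanSpace ℝ (Fin 3) → ℂ)
    (hw : ∀ α P y x, w α P y x =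
      ((φ x - φ (x - y) : ℝ) : ℂ) +
        Complex.I * (((α ^ 2 * M)⁻¹ : ℝ) : ℂ) *
          ∑ i, (P i : ℂ) * ((φ1 i x - φ1 i (x - y) : ℝ) : ℂ)) :
    ∀ c > 0, ∃ C > 0, ∀ (α : ℝ) (P y : EuclideanSpace ℝ (Fin 3)),
      0 < α → ‖P‖ ≤ c * α →
      ∀ w0 w1 : EuclideanSpace ℝ (Fin 3) → ℂ,
        (∃ a : Fin 3 → ℂ, ∀ᵐ x, w0 x = ∑ i, a i * (φ1 i x : ℂ)) →
        (∀ i, ∫ x, conj ((φ1 i x : ℂ)) * w1 x = 0) →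
        (∀ᵐ x, w α P y x = w0 x + w1 x) →
        (∫ x, ‖w1 x‖ ^ 2) ≤ C * (‖y‖ ^ 2 / α ^ 2 + ‖y‖ ^ 4) ∧
        |(∫ x, ‖w0 x‖ ^ 2) - 2 * lam * ‖y‖ ^ 2| ≤
          C * (‖y‖ ^ 2 / α ^ 2 + ‖y‖ ^ 4 + ‖y‖ ^ 6) := by
  intro c hc
  have hM0 : 0 < M := by rw [hM]; positivity
  obtain ⟨C, hC, H⟩ := main_est φ φ1 φ2 hφ hφ1 hφ2 hweak1 hweak2 hradial hgrad (2 * lam) M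
    (by rw [hlam]; ring) hM0 c hc
  refine ⟨C, hC, ?_⟩
  rintro α P y hα hP w0 w1 ⟨a, hw0⟩ horth hsum
  have cA : ∀ i, (hφ1 i).toLp =ᵐ[volume] φ1 i := fun i => (hφ1 i).coeFn_toLp
  have sumc : ∀ (p : Fin 3 → ℝ), ((∑ j, p j • (hφ1 j).toLp : HH) : E3 → ℝ)
      =ᵐ[volume] fun x => ∑ j, p j * φ1 j x := by
    intro p
    filter_upwards [coe_sum3 p (fun j => (hφ1 j).toLp), cA 0, cA 1, cA 2] with x h h0 h1 h2
    rw [h]; simp only [Fin.sum_univ_three, h0, h1, h2]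
  have hshift : ∀ (f : E3 → ℝ) (hf : MemLp f 2 volume),
      ((hf.toLp - Tr y hf.toLp : HH) : E3 → ℝ) =ᵐ[volume] fun x => f x - f (x - y) := by
    intro f hf
    have q := (measurePreserving_sub_right volume y).quasiMeasurePreserving.ae hf.coeFn_toLp
    filter_upwards [Lp.coeFn_sub hf.toLp (Tr y hf.toLp), hf.coeFn_toLp, q,
      Tr_coe y hf.toLp] with x h1 h2 h3 h4
    rw [h1, Pi.sub_apply, h2, h4, h3]
  set u : HH := hφ.toLp - Tr y hφ.toLp with hu
  set v : HH := (α ^ 2 * M)⁻¹ • ∑ i, P i • ((hφ1 i).toLp - Tr y (hφ1 i).toLp) with hv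
  have cu : u =ᵐ[volume] fun x => φ x - φ (x - y) := hshift φ hφ
  have cv : v =ᵐ[volume] fun x => (α ^ 2 * M)⁻¹ * ∑ i, P i * (φ1 i x - φ1 i (x - y)) := by
    filter_upwards [Lp.coeFn_smul (α ^ 2 * M)⁻¹
        (∑ i, P i • ((hφ1 i).toLp - Tr y (hφ1 i).toLp) : HH),
      coe_sum3 P (fun i => (hφ1 i).toLp - Tr y (hφ1 i).toLp),
      hshift _ (hφ1 0), hshift _ (hφ1 1), hshift _ (hφ1 2)] with x h1 h2 h3 h4 h5
    rw [hv, h1, Pi.smul_apply, h2, smul_eq_mul]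
    simp only [Fin.sum_univ_three, h3, h4, h5]
  have c0 : ∀ᵐ x, w0 x = (((∑ j, (a j).re • (hφ1 j).toLp : HH) x : ℝ) : ℂ)
      + (((∑ j, (a j).im • (hφ1 j).toLp : HH) x : ℝ) : ℂ) * Complex.I := by
    filter_upwards [hw0, sumc (fun j => (a j).re), sumc (fun j => (a j).im)] with x h1 h2 h3
    rw [h1, h2, h3]
    apply Complex.ext <;> simp [Fin.sum_univ_three]
  have c1 : ∀ᵐ x, w1 x = (((u - ∑ j, (a j).re • (hφ1 j).toLp : HH) x : ℝ) : ℂ)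
      + (((v - ∑ j, (a j).im • (hφ1 j).toLp : HH) x : ℝ) : ℂ) * Complex.I := by
    filter_upwards [hsum, c0, cu, cv, Lp.coeFn_sub u (∑ j, (a j).re • (hφ1 j).toLp : HH),
      Lp.coeFn_sub v (∑ j, (a j).im • (hφ1 j).toLp : HH)] with x h1 h2 h3 h4 h5 h6
    have : w1 x = w α P y x - w0 x := by rw [h1]; ring
    rw [this, hw, h2, h5, h6, Pi.sub_apply, Pi.sub_apply, h3, h4]
    push_cast
    ring
  have orth := fun i => cplx_orth w1 (φ1 i) (hφ1 i).toLp _ _ (cA i) c1 (horth i)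
  have R := H α P y hα hP (fun j => (a j).re) (fun j => (a j).im) u v hu hv
    (fun i => (orth i).1) (fun i => (orth i).2)
  rw [cplx_norm w0 _ _ c0, cplx_norm w1 _ _ c1, ← div_pow]
  exact R
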